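/- For every multi-level apportionment instance, every non-negative integer h, and every tie-breaking, the allocation of h seats produced by the multi-level quota method fulfills lower quota. Moreover, the method satisfies house monotonicity: when the total number of seats increases from h to h+1, every node receives at least as many seats as before. -/

import Mathlib

/-- A multi-level apportionment instance: a rooted tree on nodes `0, …, n`
(root `0`, encoded by a parent function with `parent i < i` for `i ≠ 0`),
together with entitlements `W`. -/
structure MLA where
  n : ℕ
  parent : Fin (n + 1) → Fin (n + 1)
  parent_lt : ∀ i : Fin (n + 1), i ≠ 0 → (parent i : ℕ) < (i : ℕ)
  W : Fin (n + 1) → ℝ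
  W_pos : ∀ i, 0 < W i
  W_le_one : ∀ i, W i ≤ 1
  W_root : W 0 = 1
  W_sum : ∀ i : Fin (n + 1),
    (Finset.univ.filter (fun c => c ≠ 0 ∧ parent c = i)).Nonempty →
    ∑ c ∈ Finset.univ.filter (fun c => c ≠ 0 ∧ parent c = i), W c = 1

namespace MLA

variable (T : MLA)

/-- The set of children of node `i`. -/
def children (i : Fin (T.n + 1)) : Finset (Fin (T.n + 1)) :=
  Finset.univ.filter (fun c => c ≠ 0 ∧ T.parent c = i)

/-- The ancestor set `A(i)`: `A(0) = {0}` and `A(i) = {parent i} ∪ A(parent i)`. -/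
def ancestors (i : Fin (T.n + 1)) : Finset (Fin (T.n + 1)) :=
  if h : i = 0 then {0} else insert (T.parent i) (ancestors (T.parent i))
termination_by (i : ℕ)
decreasing_by exact T.parent_lt i h

/-- The entitlement of node `i` relative to the root: `R i = ∏_{a ∈ A(i) ∪ {i}} W a`. -/
def R (i : Fin (T.n + 1)) : ℝ := ∏ a ∈ insert i (T.ancestors i), T.W a

/-- `V` is an allocation of `h` seats. -/
def IsAlloc (h : ℕ) (V : Fin (T.n + 1) → ℕ) : Prop :=
  V 0 = h ∧ ∀ i, (T.children i).Nonempty → V i = ∑ c ∈ T.children i, V c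

/-- `V` fulfills lower quota: `V i ≥ LQ i = max_{a ∈ A(i)} ⌊(R i / R a) · V a⌋`. -/
def FulfillsLowerQuota (V : Fin (T.n + 1) → ℕ) : Prop :=
  ∀ i, ∀ a ∈ T.ancestors i, ⌊T.R i / T.R a * (V a : ℝ)⌋ ≤ (V i : ℤ)

/-- `V` fulfills upper quota: `V i ≤ UQ i = min_{a ∈ A(i)} ⌈(R i / R a) · V a⌉`. -/
def FulfillsUpperQuota (V : Fin (T.n + 1) → ℕ) : Prop :=
  ∀ i, ∀ a ∈ T.ancestors i, (V i : ℤ) ≤ ⌈T.R i / T.R a * (V a : ℝ)⌉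


/-- `P` is the set of nodes receiving the new seat in one step of an iterative
method with selection criterion `crit` (to be minimized among children) and
eligibility constraint `elig`: `P` is a root-to-leaf path, each non-root node on
the path is an eligible child of its parent minimizing `crit` among all eligible
children, and the seat counts along `P` each increase by one. -/
def IsStepWith (crit : (Fin (T.n + 1) → ℕ) → Fin (T.n + 1) → ℝ)
    (elig : (Fin (T.n + 1) → ℕ) → Fin (T.n + 1) → Prop)
    (P : Finset (Fin (T.n + 1))) (Vh Vh1 : Fin (T.n + 1) → ℕ) : Prop :=
  (0 : Fin (T.n + 1)) ∈ P ∧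
  (∀ i ∈ P, i ≠ 0 → T.parent i ∈ P) ∧
  (∀ i ∈ P, (T.children i).Nonempty → ∃ c ∈ T.children i, c ∈ P) ∧
  (∀ c ∈ P, ∀ d ∈ P, c ≠ 0 → d ≠ 0 → T.parent c = T.parent d → c = d) ∧
  (∀ c ∈ P, c ≠ 0 → elig Vh c ∧
    ∀ d ∈ T.children (T.parent c), elig Vh d → crit Vh c ≤ crit Vh d) ∧
  (∀ i, Vh1 i = Vh i + if i ∈ P then 1 else 0)

/-- `V : ℕ → (nodes → ℕ)` is a run of the iterative method given by `crit` and
`elig` (with arbitrary tie-breaking): `V 0` is the all-zero allocation and each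
`V (h+1)` is obtained from `V h` by allocating one more seat along a path. -/
def IsRun (crit : (Fin (T.n + 1) → ℕ) → Fin (T.n + 1) → ℝ)
    (elig : (Fin (T.n + 1) → ℕ) → Fin (T.n + 1) → Prop)
    (V : ℕ → Fin (T.n + 1) → ℕ) : Prop :=
  (∀ i, V 0 i = 0) ∧ ∀ h, ∃ P, T.IsStepWith crit elig P (V h) (V (h + 1))

/-- Adams' criterion: a child `c` minimizing `V c / R c` receives the seat. -/
noncomputable def adamsCrit (V : Fin (T.n + 1) → ℕ) (c : Fin (T.n + 1)) : ℝ :=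
  (V c : ℝ) / T.R c

/-- Jefferson's criterion: a child `c` minimizing `(V c + 1) / R c` receives the seat. -/
noncomputable def jeffersonCrit (V : Fin (T.n + 1) → ℕ) (c : Fin (T.n + 1)) : ℝ :=
  ((V c : ℝ) + 1) / T.R c

/-- Trivial eligibility constraint: every child is eligible. -/
def trivElig (_ : Fin (T.n + 1) → ℕ) (_ : Fin (T.n + 1)) : Prop := True

/-- Eligibility constraint of the quota method: `V c / W c < V (parent c) + 1`. -/
def quotaElig (V : Fin (T.n + 1) → ℕ) (c : Fin (T.n + 1)) : Prop :=
  (V c : ℝ) / T.W c < (V (T.parent c) : ℝ) + 1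

/-- Eligibility constraint of the upper-compliant quota method:
`V c / R c < (V a + 1) / R a` for every ancestor `a` of `c`. -/
def ucElig (V : Fin (T.n + 1) → ℕ) (c : Fin (T.n + 1)) : Prop :=
  ∀ a ∈ T.ancestors c, (V c : ℝ) / T.R c < ((V a : ℝ) + 1) / T.R a

end MLA

namespace MLA

lemma anc_zero (T : MLA) : T.ancestors 0 = {0} := by
  rw [ancestors]; simp

lemma anc_ne (T : MLA) {i : Fin (T.n + 1)} (h : i ≠ 0) :
    T.ancestors i = insert (T.parent i) (T.ancestors (T.parent i)) := by
  rw [ancestors]; simp [h]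

lemma anc_le (T : MLA) : ∀ (m : ℕ) (i : Fin (T.n + 1)), (i : ℕ) = m →
    ∀ a ∈ T.ancestors i, (a : ℕ) ≤ i := by
  intro m
  induction m using Nat.strong_induction_on with
  | _ m ih =>
    intro i hi a ha
    by_cases h : i = 0
    · subst h
      rw [anc_zero] at ha
      simp at ha
      simp [ha]
    · rw [anc_ne T h] at ha
      have hp := T.parent_lt i h
      rcases Finset.mem_insert.1 ha with rfl | ha
      · exact hp.le
      · have := ih _ (hi ▸ hp) (T.parent i) rfl a ha
        omega

lemma R_pos (T : MLA) (i : Fin (T.n + 1)) : 0 < T.R i :=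
  Finset.prod_pos fun a _ => T.W_pos a

lemma R_ne (T : MLA) {i : Fin (T.n + 1)} (h : i ≠ 0) :
    T.R i = T.W i * T.R (T.parent i) := by
  unfold R
  rw [Finset.prod_insert, anc_ne T h]
  intro hi
  rw [anc_ne T h] at hi
  have hp := T.parent_lt i h
  rcases Finset.mem_insert.1 hi with h' | h'
  · rw [← h'] at hp; omega
  · have := anc_le T _ _ rfl _ h'
    omega

lemma mem_children (T : MLA) {c p : Fin (T.n + 1)} :
    c ∈ T.children p ↔ c ≠ 0 ∧ T.parent c = p := by
  simp [children]

variable {T : MLA} {V : ℕ → Fin (T.n + 1) → ℕ}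

lemma run_mono {crit elig} (hrun : T.IsRun crit elig V) (i : Fin (T.n + 1)) :
    Monotone (fun h => V h i) := by
  apply monotone_nat_of_le_succ
  intro h
  obtain ⟨P, -, -, -, -, -, hV⟩ := hrun.2 h
  simp only [hV i]; omega

lemma run_sum {crit elig} (hrun : T.IsRun crit elig V) (p : Fin (T.n + 1))
    (hne : (T.children p).Nonempty) (h : ℕ) :
    V h p = ∑ c ∈ T.children p, V h c := by
  induction h with
  | zero => simp [hrun.1]
  | succ h ih =>
    obtain ⟨P, -, h2, h3, h4, -, hV⟩ := hrun.2 h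
    simp only [hV, Finset.sum_add_distrib, ← ih]
    congr 1
    by_cases hp : p ∈ P
    · obtain ⟨c, hc, hcP⟩ := h3 p hp hne
      have hc' := (mem_children T).1 hc
      rw [if_pos hp, Finset.sum_eq_single c, if_pos hcP]
      · intro b hb hbc
        have hb' := (mem_children T).1 hb
        rw [if_neg]
        intro hbP
        exact hbc (h4 b hbP c hcP hb'.1 hc'.1 (hb'.2.trans hc'.2.symm))
      · exact fun hh => absurd hc hh
    · rw [if_neg hp, Finset.sum_eq_zero]
      intro b hb
      have hb' := (mem_children T).1 hb
      rw [if_neg]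
      intro hbP
      exact hp (hb'.2 ▸ h2 b hbP hb'.1)

lemma key (hrun : T.IsRun T.jeffersonCrit T.quotaElig V) (h : ℕ) (c : Fin (T.n + 1))
    (hc0 : c ≠ 0) :
    T.W c * ((V h (T.parent c) : ℝ) + 1) ≤ (V h c : ℝ) + 1 := by
  by_contra hcon
  push Not at hcon
  set p := T.parent c with hp
  have hcp : c ∈ T.children p := (mem_children T).2 ⟨hc0, rfl⟩
  have hne : (T.children p).Nonempty := ⟨c, hcp⟩
  have hW : ∑ x ∈ T.children p, T.W x = 1 := T.W_sum p hne
  have hWc := T.W_pos c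
  obtain ⟨l, hl⟩ : ∃ l : ℝ, l * T.W c = (V h c : ℝ) + 1 :=
    ⟨((V h c : ℝ) + 1) / T.W c, by field_simp⟩
  have hl0 : 0 < l := by
    by_contra hneg
    push Not at hneg
    have : l * T.W c ≤ 0 := mul_nonpos_of_nonpos_of_nonneg hneg hWc.le
    have : (0 : ℝ) ≤ V h c := Nat.cast_nonneg _
    linarith
  have hlH : l < (V h p : ℝ) + 1 := by
    rw [← hl] at hcon
    rw [mul_comm] at hcon
    exact lt_of_mul_lt_mul_left hcon hWc.le
  have hsum : ∀ s, (V s p : ℝ) = ∑ x ∈ T.children p, (V s x : ℝ) := by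
    intro s
    rw [run_sum hrun p hne s]; push_cast; rfl
  have hone : ∑ x ∈ T.children p, (if x = c then (1 : ℝ) else 0) = 1 := by
    rw [Finset.sum_ite_eq' , if_pos hcp]
  -- some over-represented sibling
  have hD : ∃ d ∈ T.children p, l * T.W d < (V h d : ℝ) := by
    by_contra hno
    push Not at hno
    have : ∑ x ∈ T.children p, ((V h x : ℝ) + (if x = c then (1 : ℝ) else 0))
        ≤ ∑ x ∈ T.children p, l * T.W x := by
      apply Finset.sum_le_sum
      intro x hx
      by_cases hxc : x = c
      · subst hxc; simp [hl]
      · simpa [hxc] using hno x hx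
    rw [Finset.sum_add_distrib, hone, ← hsum, ← Finset.mul_sum, hW] at this
    linarith
  -- the last time such a sibling got a seat
  have hex : ∃ s, ∀ d ∈ T.children p, l * T.W d < (V h d : ℝ) → V s d = V h d :=
    ⟨h, fun _ _ _ => rfl⟩
  classical
  obtain ⟨s, hs, hmin⟩ : ∃ s, (∀ d ∈ T.children p, l * T.W d < (V h d : ℝ) → V s d = V h d) ∧
      ∀ r < s, ¬ (∀ d ∈ T.children p, l * T.W d < (V h d : ℝ) → V r d = V h d) :=
    ⟨Nat.find hex, Nat.find_spec hex, fun r hr => Nat.find_min hex hr⟩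
  have hsh : s ≤ h := by
    by_contra hh
    exact hmin h (by omega) (fun _ _ _ => rfl)
  obtain ⟨t, rfl⟩ : ∃ t, s = t + 1 := by
    cases s with
    | succ t => exact ⟨t, rfl⟩
    | zero =>
      exfalso
      obtain ⟨d, hd, hd'⟩ := hD
      have h1 := hs d hd hd'
      rw [hrun.1] at h1
      rw [← h1] at hd'
      have := mul_pos hl0 (T.W_pos d)
      push_cast at hd'
      linarith
  have hnt := hmin t (by omega)
  push Not at hnt
  obtain ⟨d, hd, hdD, hdne⟩ := hnt
  have hds := hs d hd hdD
  obtain ⟨P, -, h2, -, -, h5, hV⟩ := hrun.2 t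
  have hdP : d ∈ P := by
    by_contra hh
    have := hV d
    rw [if_neg hh] at this
    omega
  have hd' := (mem_children T).1 hd
  have hpP : p ∈ P := hd'.2 ▸ h2 d hdP hd'.1
  have hTp : (V (t+1) p : ℝ) = V t p + 1 := by
    rw [hV p, if_pos hpP]; push_cast; rfl
  have hdV : (V h d : ℝ) = V t d + 1 := by
    rw [← hds, hV d, if_pos hdP]; push_cast; rfl
  have hcrit := (h5 d hdP hd'.1).2
  rw [hd'.2] at hcrit
  have hRp := R_pos T p
  -- eligible siblings have a large quotient
  have helig : ∀ e ∈ T.children p, T.quotaElig (V t) e → l * T.W e < (V t e : ℝ) + 1 := by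
    intro e he hel
    have he' := (mem_children T).1 he
    have h6 := hcrit e he hel
    unfold jeffersonCrit at h6
    rw [R_ne T hd'.1, R_ne T he'.1, hd'.2, he'.2, ← hdV] at h6
    have hWd := T.W_pos d
    have hWe := T.W_pos e
    rw [← div_div, ← div_div] at h6
    have h7 : (V h d : ℝ) / T.W d ≤ ((V t e : ℝ) + 1) / T.W e :=
      (div_le_div_iff_of_pos_right hRp).1 h6
    have h8 : l < (V h d : ℝ) / T.W d := (lt_div_iff₀ hWd).2 hdD
    exact (lt_div_iff₀ hWe).1 (h8.trans_le h7)
  have hinel : ∀ e ∈ T.children p, ¬ T.quotaElig (V t) e →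
      T.W e * ((V t p : ℝ) + 1) ≤ (V t e : ℝ) := by
    intro e he hel
    have he' := (mem_children T).1 he
    unfold quotaElig at hel
    rw [he'.2] at hel
    push Not at hel
    have := (le_div_iff₀ (T.W_pos e)).1 hel
    linarith
  have hmonoR : ∀ x {a b : ℕ}, a ≤ b → (V a x : ℝ) ≤ V b x := fun x a b hab => by
    exact_mod_cast run_mono hrun x hab
  have hHT : (V t p : ℝ) + 1 ≤ V h p := by
    rw [← hTp]; exact hmonoR p hsh
  have hcin : ¬ T.quotaElig (V t) c := by
    intro hh
    have h7 := helig c hcp hh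
    have := hmonoR c (show t ≤ h by omega)
    linarith
  have hfin : ∑ x ∈ T.children p, ((V h x : ℝ) + (if x = c then (1 : ℝ) else 0) - V (t+1) x)
      < ∑ x ∈ T.children p, ((V h p : ℝ) - V t p) * T.W x := by
    apply Finset.sum_lt_sum
    · intro x hx
      have hWx := T.W_pos x
      have hnn : 0 ≤ ((V h p : ℝ) - V t p) * T.W x := mul_nonneg (by linarith) hWx.le
      have hm1 := hmonoR x (show t ≤ t + 1 by omega)
      have hm2 := hmonoR x hsh
      by_cases hxc : x = c
      · subst hxc
        have := hinel x hx hcin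
        simp only [if_true]
        nlinarith
      · rw [if_neg hxc]
        by_cases hxD : l * T.W x < (V h x : ℝ)
        · rw [hs x hx hxD]; linarith
        · push Not at hxD
          by_cases hxe : T.quotaElig (V t) x
          · have h7 := helig x hx hxe
            have h8 : (V h x : ℝ) < (V t x : ℝ) + 1 := by linarith
            have h9 : V h x ≤ V t x := by
              have : V h x < V t x + 1 := by exact_mod_cast h8
              omega
            have h10 : (V h x : ℝ) ≤ V t x := by exact_mod_cast h9
            linarith
          · have := hinel x hx hxe
            have h11 := mul_lt_mul_of_pos_right hlH hWx
            nlinarith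
    · refine ⟨c, hcp, ?_⟩
      have := hinel c hcp hcin
      have hm1 := hmonoR c (show t ≤ t + 1 by omega)
      simp only [if_true]
      nlinarith
  rw [Finset.sum_sub_distrib, Finset.sum_add_distrib, hone, ← hsum, ← hsum, ← Finset.mul_sum,
    hW, hTp] at hfin
  linarith

lemma key_anc (hrun : T.IsRun T.jeffersonCrit T.quotaElig V) (h : ℕ) :
    ∀ (m : ℕ) (i : Fin (T.n + 1)), (i : ℕ) = m → ∀ a ∈ T.ancestors i,
      T.R i / T.R a * ((V h a : ℝ) + 1) ≤ (V h i : ℝ) + 1 := by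
  intro m
  induction m using Nat.strong_induction_on with
  | _ m ih =>
    intro i hi a ha
    by_cases h0 : i = 0
    · subst h0
      rw [anc_zero] at ha
      rw [Finset.mem_singleton.1 ha, div_self (R_pos T 0).ne', one_mul]
    · have hk := key hrun h i h0
      have hp := T.parent_lt i h0
      rw [anc_ne T h0] at ha
      rcases Finset.mem_insert.1 ha with rfl | ha
      · rw [R_ne T h0, mul_div_cancel_right₀ _ (R_pos T _).ne']
        exact hk
      · have h1 := ih _ (hi ▸ hp) (T.parent i) rfl a ha
        rw [R_ne T h0, mul_div_assoc, mul_assoc]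
        exact (mul_le_mul_of_nonneg_left h1 (T.W_pos i).le).trans hk

end MLA

/-- Any run of the multi-level quota method fulfills lower
quota after every number of seats, and satisfies house monotonicity. -/
theorem quota_method_lower_quota_and_house_monotone (T : MLA)
    (V : ℕ → Fin (T.n + 1) → ℕ)
    (hrun : T.IsRun T.jeffersonCrit T.quotaElig V) :
    (∀ h : ℕ, T.FulfillsLowerQuota (V h)) ∧ (∀ h : ℕ, ∀ i, V h i ≤ V (h + 1) i) := by
  refine ⟨fun h i a ha => ?_, fun h i => MLA.run_mono hrun i (Nat.le_succ h)⟩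
  have h1 := MLA.key_anc hrun h _ i rfl a ha
  have h2 : 0 < T.R i / T.R a := div_pos (T.R_pos i) (T.R_pos a)
  rw [← Int.lt_add_one_iff, Int.floor_lt]
  push_cast
  linarith
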